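/- If ρ is a decimal palindrome whose decimal digits are all 0's and 1's, then 18·ρ is a v-palindrome. -/

import Mathlib

/-- The decimal digit reversal of a natural number. -/
def rev (n : ℕ) : ℕ := Nat.ofDigits 10 ((Nat.digits 10 n).reverse)

/-- The additive arithmetic function v, with v(p) = p and v(p^e) = p + e for e ≥ 2. -/
def v (n : ℕ) : ℕ := n.factorization.sum (fun p e => p + if e = 1 then 0 else e)

/-- n is a v-palindrome: 10 ∤ n, n ≠ r(n), and v(n) = v(r(n)). -/
def IsVPalindrome (n : ℕ) : Prop := ¬ (10 ∣ n) ∧ n ≠ rev n ∧ v n = v (rev n)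

theorem v_mul_of_coprime {a b : ℕ} (h : a.Coprime b) : v (a * b) = v a + v b := by
  unfold v
  rw [Nat.factorization_mul_of_coprime h]
  exact Finsupp.sum_add_index_of_disjoint (by simpa using h.disjoint_primeFactors) _

theorem v_prime_pow {p e : ℕ} (hp : p.Prime) (he : e ≠ 0) :
    v (p ^ e) = p + if e = 1 then 0 else e := by
  have hs : (Finsupp.single p e).support = {p} := Finsupp.support_single p he
  rw [v, hp.factorization_pow, Finsupp.sum, hs]
  simp

theorem v_eighteen_mul {n : ℕ} (hn : Odd n) : v (18 * n) = v (81 * n) := by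
  obtain ⟨b, m, hm, rfl⟩ :=
    Nat.exists_eq_pow_mul_and_not_dvd hn.pos.ne' 3 (by norm_num)
  have h3 : ∀ k, (3 ^ k).Coprime m := fun k =>
    Nat.Coprime.pow_left k ((Nat.Prime.coprime_iff_not_dvd Nat.prime_three).2 hm)
  have hm_odd : Odd m := (Nat.odd_mul.1 hn).2
  have h2 : (2 ^ 1).Coprime (3 ^ (b + 2) * m) :=
    Nat.coprime_two_left.2 ((Odd.pow (by decide)).mul hm_odd)
  rw [show 18 * (3 ^ b * m) = 2 ^ 1 * (3 ^ (b + 2) * m) by ring,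
    show 81 * (3 ^ b * m) = 3 ^ (b + 4) * m by ring,
    v_mul_of_coprime h2, v_mul_of_coprime (h3 _), v_mul_of_coprime (h3 _),
    v_prime_pow Nat.prime_two (by simp), v_prime_pow Nat.prime_three (by simp),
    v_prime_pow Nat.prime_three (by simp)]
  simp
  omega

theorem ofDigits_zipWith_mul_add (b c d : ℕ) (l₁ l₂ : List ℕ) (h : l₁.length = l₂.length) :
    Nat.ofDigits b (List.zipWith (fun x y => c * x + d * y) l₁ l₂) =
      c * Nat.ofDigits b l₁ + d * Nat.ofDigits b l₂ := by
  induction l₁ generalizing l₂ with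
  | nil => cases l₂ <;> simp_all
  | cons x l ih =>
    cases l₂ with
    | nil => simp at h
    | cons y l' =>
      simp only [List.zipWith_cons_cons, Nat.ofDigits_cons, ih l' (by simpa using h)]
      ring

theorem rev_mod_ten_ne_zero {n : ℕ} (hn : n ≠ 0) : rev n % 10 ≠ 0 := by
  have hne := Nat.digits_ne_nil_iff_ne_zero (b := 10).2 hn
  have hlast := Nat.getLast_digit_ne_zero 10 hn
  have hlt := Nat.digits_lt_base (by norm_num : 1 < 10) (List.getLast_mem hne)
  have h : (Nat.digits 10 n).reverse =
      (Nat.digits 10 n).getLast hne :: (Nat.digits 10 n).dropLast.reverse := by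
    conv_lhs => rw [← List.dropLast_append_getLast hne]
    simp
  rw [rev, h, Nat.ofDigits_cons]
  omega

theorem digits_reverse_of_eq_rev {n : ℕ} (h : n = rev n) :
    (Nat.digits 10 n).reverse = Nat.digits 10 n := by
  rcases eq_or_ne n 0 with rfl | hn
  · simp
  have hmod : n % 10 ≠ 0 := by
    rw [h]
    exact rev_mod_ten_ne_zero hn
  conv_rhs => rw [h, rev]
  refine (Nat.digits_ofDigits 10 (by norm_num) _ (fun d hd => ?_) (fun hne => ?_)).symm
  · exact Nat.digits_lt_base (by norm_num) (List.mem_reverse.1 hd)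
  · rw [List.getLast_reverse]
    simpa [Nat.digits_of_two_le_of_pos (b := 10) (by norm_num) hn.bot_lt] using hmod

theorem rev_eighteen_mul {n : ℕ} (hn : n ≠ 0) (hpal : n = rev n)
    (hdig : ∀ d ∈ Nat.digits 10 n, d = 0 ∨ d = 1) : rev (18 * n) = 81 * n := by
  have hmod : n % 10 ≠ 0 := by
    rw [hpal]
    exact rev_mod_ten_ne_zero hn
  have hrev := digits_reverse_of_eq_rev hpal
  have hval := Nat.ofDigits_digits 10 n
  have hcons : Nat.digits 10 n = n % 10 :: Nat.digits 10 (n / 10) :=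
    Nat.digits_of_two_le_of_pos (by norm_num) hn.bot_lt
  generalize Nat.digits 10 n = l at *
  have hval_append : Nat.ofDigits 10 (l ++ [0]) = n := by
    simp [Nat.ofDigits_append, hval]
  have hval_cons : Nat.ofDigits 10 (0 :: l) = 10 * n := by
    simp [Nat.ofDigits_cons, hval]
  have hSrev : (List.zipWith (fun x y => 8 * x + 1 * y) (l ++ [0]) (0 :: l)).reverse =
      List.zipWith (fun x y => 8 * x + 1 * y) (0 :: l) (l ++ [0]) := by
    rw [List.reverse_zipWith (by simp)]
    simp [hrev]
  have hS : Nat.digits 10 (18 * n) =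
      List.zipWith (fun x y => 8 * x + 1 * y) (l ++ [0]) (0 :: l) := by
    have hsum := ofDigits_zipWith_mul_add 10 8 1 (l ++ [0]) (0 :: l) (by simp)
    rw [hval_append, hval_cons, show 8 * n + 1 * (10 * n) = 18 * n by ring] at hsum
    rw [← hsum]
    refine Nat.digits_ofDigits 10 (by norm_num) _ (fun d hd => ?_) (fun hne => ?_)
    · obtain ⟨i, hi, rfl⟩ := List.getElem_of_mem hd
      rw [List.getElem_zipWith]
      have hbin : ∀ x, x ∈ l ++ [0] ∨ x ∈ 0 :: l → x ≤ 1 := by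
        intro x hx
        have := hdig x
        simp only [List.mem_append, List.mem_cons, List.not_mem_nil, or_false] at hx
        grind
      have h₁ := hbin _ (Or.inl (List.getElem_mem (l := l ++ [0]) (n := i) (by grind)))
      have h₂ := hbin _ (Or.inr (List.getElem_mem (l := 0 :: l) (n := i) (by grind)))
      omega
    · rw [← List.head_reverse (by simp)]
      simp only [hSrev]
      simpa [hcons] using hmod
  rw [rev, hS, hSrev, ofDigits_zipWith_mul_add _ _ _ _ _ (by simp), hval_append, hval_cons]
  ring

/-- If ρ is a decimal palindrome whose digits are all 0's and 1's,
then 18·ρ is a v-palindrome. -/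
theorem vpalindrome_of_binary_palindrome (ρ : ℕ) (hρ : 0 < ρ)
    (hpal : ρ = rev ρ) (hdig : ∀ d ∈ Nat.digits 10 ρ, d = 0 ∨ d = 1) :
    IsVPalindrome (18 * ρ) := by
  have hmod : ρ % 10 = 1 := by
    have hne : ρ % 10 ≠ 0 := by
      rw [hpal]
      exact rev_mod_ten_ne_zero hρ.ne'
    refine (hdig _ ?_).resolve_left hne
    rw [Nat.digits_of_two_le_of_pos (by norm_num) hρ]
    exact List.mem_cons_self
  rw [IsVPalindrome, rev_eighteen_mul hρ.ne' hpal hdig]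
  exact ⟨by omega, by omega, v_eighteen_mul (Nat.odd_iff.2 (by omega))⟩
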